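/- Let M_κ be a multislice on n ≥ 4 points. If A ⊆ M_κ is nonempty with vol(A) = α, then Φ(A) ≥ 2(1−α)/(n−1). -/

import Mathlib

open Finset

noncomputable section

/-- The multislice: vectors in `[ℓ]^n` whose colour counts are given by `κ`. -/
def multislice (ℓ n : ℕ) (κ : Fin ℓ → ℕ) : Finset (Fin n → Fin ℓ) :=
  Finset.univ.filter fun u => ∀ i, (Finset.univ.filter fun j => u j = i).card = κ i

/-- Expectation with respect to the uniform measure on the multislice. -/
def msExp (ℓ n : ℕ) (κ : Fin ℓ → ℕ) (f : (Fin n → Fin ℓ) → ℝ) : ℝ :=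
  (∑ u ∈ multislice ℓ n κ, f u) / ((multislice ℓ n κ).card : ℝ)

/-- The indicator variable `x_{ji}`. -/
def xvar (ℓ n : ℕ) (j : Fin n) (i : Fin ℓ) (u : Fin n → Fin ℓ) : ℝ :=
  if u j = i then 1 else 0

/-- A function on the multislice has degree one if it is of the form
`c + ∑_j ∑_i c_{ji} x_{ji}`. -/
def degreeOne (ℓ n : ℕ) (κ : Fin ℓ → ℕ) (f : (Fin n → Fin ℓ) → ℝ) : Prop :=
  ∃ (c : ℝ) (coef : Fin n → Fin ℓ → ℝ), ∀ u ∈ multislice ℓ n κ,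
    f u = c + ∑ j, ∑ i, coef j i * xvar ℓ n j i u

/-- Distance of a real number to the set `{0,1}`. -/
def dist01 (x : ℝ) : ℝ := min |x| |x - 1|

/-- A function is Boolean on the multislice if it takes values in `{0,1}` there. -/
def booleanOn (ℓ n : ℕ) (κ : Fin ℓ → ℕ) (g : (Fin n → Fin ℓ) → ℝ) : Prop :=
  ∀ u ∈ multislice ℓ n κ, g u = 0 ∨ g u = 1

/-- A dictator: a function depending on at most one coordinate. -/
def dictator (ℓ n : ℕ) (κ : Fin ℓ → ℕ) (g : (Fin n → Fin ℓ) → ℝ) : Prop :=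
  ∃ j : Fin n, ∀ u ∈ multislice ℓ n κ, ∀ v ∈ multislice ℓ n κ, u j = v j → g u = g v

/-- The volume `|A|/|M_κ|` of a subset of the multislice. -/
def msVol (ℓ n : ℕ) (κ : Fin ℓ → ℕ) (A : Finset (Fin n → Fin ℓ)) : ℝ :=
  (A.card : ℝ) / ((multislice ℓ n κ).card : ℝ)

/-- The edge expansion `Φ(A)`: the probability that swapping two distinct coordinates (chosen
uniformly at random) of a uniformly random element of `A` gives an element outside `A`. -/
def msExpansion (ℓ n : ℕ) (A : Finset (Fin n → Fin ℓ)) : ℝ :=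
  (∑ u ∈ A, ((Finset.univ.filter fun q : Fin n × Fin n =>
      q.1 ≠ q.2 ∧ (u ∘ Equiv.swap q.1 q.2) ∉ A).card : ℝ)) /
    ((A.card : ℝ) * ((n : ℝ) * ((n : ℝ) - 1)))


/-! For a unitary representation of `Perm ι` let `V_S` be the vectors fixed by all permutations
supported in `S`, and `N = |S|`. The walk on `S` is the average of the walks on the sets `S \ {i}`,
so its spectral gap follows by induction on `N` once `v ⊥ V_S` is known to project little onto
the spaces `V_{S \ {i}}` in total. That bound is an almost-orthogonality statement: for `i ≠ j` and
`gᵢ ∈ V_{S \ {i}}`, `gⱼ ∈ V_{S \ {j}}` orthogonal to `V_S`, averaging over where `i` is sent gives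
`(N - 1) ⟪gᵢ, gⱼ⟫ = -⟪(i j) gᵢ, gⱼ⟫`, and the right-hand sides assemble to minus a square when all
`V_{S \ {i}}` are identified with one another. Applied to the centred indicator of `A` on an orbit
of `Perm ι`, the spectral gap is the isoperimetric inequality. -/

open scoped InnerProductSpace

section Fixed

variable {G V : Type*} [Group G] [NormedAddCommGroup V] [InnerProductSpace ℝ V]

/-- The vectors of a unitary representation that are fixed by the subgroup `H`. -/
def fixedVectors (ρ : G →* (V ≃ₗᵢ[ℝ] V)) (H : Subgroup G) : Submodule ℝ V where
  carrier := {v | ∀ σ ∈ H, ρ σ v = v}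
  add_mem' hv hw σ hσ := by rw [map_add, hv σ hσ, hw σ hσ]
  zero_mem' _ _ := map_zero _
  smul_mem' c _ hv σ hσ := by rw [map_smul, hv σ hσ]

variable {ρ : G →* (V ≃ₗᵢ[ℝ] V)} {H K : Subgroup G}

lemma fixedVectors_anti (h : H ≤ K) : fixedVectors ρ K ≤ fixedVectors ρ H :=
  fun _ hv σ hσ => hv σ (h hσ)

lemma isClosed_fixedVectors : IsClosed (fixedVectors ρ H : Set V) := by
  have h : (fixedVectors ρ H : Set V) = ⋂ σ ∈ H, {v | ρ σ v = v} := by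
    ext v
    simp only [Set.mem_iInter]
    rfl
  rw [h]
  exact isClosed_biInter fun σ _ => isClosed_eq (ρ σ).continuous continuous_id

instance [CompleteSpace V] : CompleteSpace (fixedVectors ρ H) :=
  isClosed_fixedVectors.completeSpace_coe

lemma inner_map_eq_of_mem_fixedVectors {σ : G} (hσ : σ ∈ H) (v : V) {w : V}
    (hw : w ∈ fixedVectors ρ H) : ⟪ρ σ v, w⟫_ℝ = ⟪v, w⟫_ℝ := by
  conv_lhs => rw [← hw σ hσ]
  exact (ρ σ).inner_map_map v w

lemma map_mem_orthogonal_fixedVectors {σ : G} (hσ : σ ∈ H) {v : V}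
    (hv : v ∈ (fixedVectors ρ H)ᗮ) : ρ σ v ∈ (fixedVectors ρ H)ᗮ := by
  rw [Submodule.mem_orthogonal'] at hv ⊢
  exact fun w hw => (inner_map_eq_of_mem_fixedVectors hσ v hw).trans (hv w hw)

lemma map_mul_apply (σ τ : G) (v : V) : ρ (σ * τ) v = ρ σ (ρ τ v) := by
  rw [map_mul, LinearIsometryEquiv.coe_mul, Function.comp_apply]

-- Rewrites the Dirichlet form through `v - ρ σ v`, which ignores fixed vectors
lemma inner_sub_map_self (σ : G) (v : V) : ⟪v, v - ρ σ v⟫_ℝ = ‖v - ρ σ v‖ ^ 2 / 2 := by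
  rw [norm_sub_sq_real, (ρ σ).norm_map, inner_sub_right, real_inner_self_eq_norm_sq]
  ring

end Fixed

section Permutations

variable {ι : Type*}

/-- The permutations of `ι` that move only elements of `S`. -/
abbrev permsOn (S : Finset ι) : Subgroup (Equiv.Perm ι) :=
  fixingSubgroup (Equiv.Perm ι) (S : Set ι)ᶜ

lemma mem_permsOn {S : Finset ι} {σ : Equiv.Perm ι} :
    σ ∈ permsOn S ↔ ∀ x ∉ S, σ x = x := by
  simp only [permsOn, mem_fixingSubgroup_iff, Set.mem_compl_iff, mem_coe, Equiv.Perm.smul_def]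

lemma permsOn_mono {S T : Finset ι} (h : S ⊆ T) : permsOn S ≤ permsOn T :=
  fun _ hσ => mem_permsOn.2 fun x hx => mem_permsOn.1 hσ x (mt (@h x) hx)

lemma apply_mem_of_mem_permsOn {S : Finset ι} {σ : Equiv.Perm ι} (hσ : σ ∈ permsOn S) {k : ι} :
    σ k ∈ S ↔ k ∈ S := by
  refine ⟨fun h => ?_, fun hk => ?_⟩
  · by_contra hk
    exact hk (mem_permsOn.1 hσ k hk ▸ h)
  · by_contra h
    exact h ((σ.injective (mem_permsOn.1 hσ _ h)).symm ▸ hk)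

lemma permsOn_eq_bot {S : Finset ι} (hS : S.card ≤ 1) : permsOn S = ⊥ := by
  refine (Subgroup.eq_bot_iff_forall _).2 fun σ hσ => Equiv.ext fun x => ?_
  by_cases hx : x ∈ S
  · exact card_le_one.1 hS _ ((apply_mem_of_mem_permsOn hσ).2 hx) _ hx
  · exact mem_permsOn.1 hσ x hx

lemma permsOn_univ [Fintype ι] : permsOn (univ : Finset ι) = ⊤ :=
  (Subgroup.eq_top_iff' _).2 fun _ => mem_permsOn.2 fun x hx => absurd (mem_univ x) hx

variable [DecidableEq ι]

lemma mem_permsOn_erase {S : Finset ι} {i : ι} {σ : Equiv.Perm ι} (hσ : σ ∈ permsOn S)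
    (hi : σ i = i) : σ ∈ permsOn (S.erase i) := by
  refine mem_permsOn.2 fun x hx => ?_
  obtain rfl | hxi := eq_or_ne x i
  · exact hi
  · exact mem_permsOn.1 hσ x fun hxS => hx (mem_erase.2 ⟨hxi, hxS⟩)

lemma swap_mem_permsOn {S : Finset ι} {i j : ι} (hi : i ∈ S) (hj : j ∈ S) :
    Equiv.swap i j ∈ permsOn S :=
  mem_permsOn.2 fun _ hx => Equiv.swap_apply_of_ne_of_ne
    (ne_of_mem_of_not_mem hi hx).symm (ne_of_mem_of_not_mem hj hx).symm

end Permutations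

section Transpositions

variable {ι V : Type*} [NormedAddCommGroup V] [InnerProductSpace ℝ V]
  {ρ : Equiv.Perm ι →* (V ≃ₗᵢ[ℝ] V)} {S : Finset ι}

lemma fixedVectors_permsOn_eq_top (hS : S.card ≤ 1) : fixedVectors ρ (permsOn S) = ⊤ := by
  refine (Submodule.eq_top_iff').2 fun v σ hσ => ?_
  rw [permsOn_eq_bot hS, Subgroup.mem_bot] at hσ
  rw [hσ, map_one, LinearIsometryEquiv.coe_one, id_eq]

variable [DecidableEq ι]

lemma map_eq_map_of_apply_eq {i : ι} {σ τ : Equiv.Perm ι} {g : V} (hσ : σ ∈ permsOn S)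
    (hτ : τ ∈ permsOn S) (h : σ i = τ i) (hg : g ∈ fixedVectors ρ (permsOn (S.erase i))) :
    ρ σ g = ρ τ g := by
  have hfix : (τ⁻¹ * σ) i = i := by rw [Equiv.Perm.mul_apply, h, Equiv.Perm.inv_eq_iff_eq]
  have hmap := hg _ (mem_permsOn_erase (mul_mem (inv_mem hτ) hσ) hfix)
  calc ρ σ g = ρ τ (ρ (τ⁻¹ * σ) g) := by
        rw [← map_mul_apply, mul_inv_cancel_left]
    _ = ρ τ g := by rw [hmap]

lemma sum_map_swap_mem_fixedVectors {i : ι} (hi : i ∈ S) {g : V}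
    (hg : g ∈ fixedVectors ρ (permsOn (S.erase i))) :
    ∑ k ∈ S, ρ (Equiv.swap i k) g ∈ fixedVectors ρ (permsOn S) := by
  intro σ hσ
  rw [map_sum]
  refine sum_equiv σ (fun k => (apply_mem_of_mem_permsOn hσ).symm) fun k hk => ?_
  rw [← map_mul_apply]
  refine map_eq_map_of_apply_eq (mul_mem hσ (swap_mem_permsOn hi hk))
    (swap_mem_permsOn hi ((apply_mem_of_mem_permsOn hσ).2 hk)) ?_ hg
  rw [Equiv.Perm.mul_apply, Equiv.swap_apply_left, Equiv.swap_apply_left]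

lemma sum_map_swap_eq_zero {i : ι} (hi : i ∈ S) {g : V}
    (hg : g ∈ fixedVectors ρ (permsOn (S.erase i))) (horth : g ∈ (fixedVectors ρ (permsOn S))ᗮ) :
    ∑ k ∈ S, ρ (Equiv.swap i k) g = 0 :=
  Submodule.disjoint_def.1 (Submodule.orthogonal_disjoint _) _
    (sum_map_swap_mem_fixedVectors hi hg)
    (sum_mem fun _ hk => map_mem_orthogonal_fixedVectors (swap_mem_permsOn hi hk) horth)

lemma card_sub_one_mul_inner {i j : ι} (hi : i ∈ S) (hj : j ∈ S) (hij : i ≠ j) {g g' : V}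
    (hg : g ∈ fixedVectors ρ (permsOn (S.erase i)))
    (hg' : g' ∈ fixedVectors ρ (permsOn (S.erase j)))
    (horth : g ∈ (fixedVectors ρ (permsOn S))ᗮ) :
    ((S.card : ℝ) - 1) * ⟪g, g'⟫_ℝ = -⟪ρ (Equiv.swap i j) g, g'⟫_ℝ := by
  have hfix : ∀ k ∈ S.erase j, ⟪ρ (Equiv.swap i k) g, g'⟫_ℝ = ⟪g, g'⟫_ℝ := fun k hk =>
    inner_map_eq_of_mem_fixedVectors (swap_mem_permsOn (mem_erase.2 ⟨hij, hi⟩) hk) g hg'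
  have hsum : ∑ k ∈ S, ⟪ρ (Equiv.swap i k) g, g'⟫_ℝ = 0 := by
    rw [← sum_inner, sum_map_swap_eq_zero hi hg horth, inner_zero_left]
  rw [← add_sum_erase S _ hj, sum_congr rfl hfix, sum_const, nsmul_eq_mul,
    cast_card_erase_of_mem hj] at hsum
  linarith

lemma inner_map_swap_map_swap {i j o : ι} (hi : i ∈ S) (hj : j ∈ S) (ho : o ∈ S) {g : V}
    (hg : g ∈ fixedVectors ρ (permsOn (S.erase i))) (g' : V) :
    ⟪ρ (Equiv.swap i o) g, ρ (Equiv.swap j o) g'⟫_ℝ = ⟪ρ (Equiv.swap i j) g, g'⟫_ℝ := by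
  have hmap : ρ (Equiv.swap j o) (ρ (Equiv.swap i j) g) = ρ (Equiv.swap i o) g := by
    rw [← map_mul_apply]
    refine map_eq_map_of_apply_eq (mul_mem (swap_mem_permsOn hj ho) (swap_mem_permsOn hi hj))
      (swap_mem_permsOn hi ho) ?_ hg
    simp only [Equiv.Perm.mul_apply, Equiv.swap_apply_left]
  rw [← hmap, LinearIsometryEquiv.inner_map_map]

lemma card_sub_one_mul_norm_sum_sq_le {g : ι → V}
    (hg : ∀ i ∈ S, g i ∈ fixedVectors ρ (permsOn (S.erase i)))
    (horth : ∀ i ∈ S, g i ∈ (fixedVectors ρ (permsOn S))ᗮ) :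
    ((S.card : ℝ) - 1) * ‖∑ i ∈ S, g i‖ ^ 2 ≤ S.card * ∑ i ∈ S, ‖g i‖ ^ 2 := by
  -- the swaps `(i o)` identify all the spaces of vectors fixed by `permsOn (S.erase i)`
  obtain rfl | ⟨o, ho⟩ := S.eq_empty_or_nonempty
  · simp
  have hinner : ∀ i ∈ S, ∀ j ∈ S, ((S.card : ℝ) - 1) * ⟪g i, g j⟫_ℝ =
      (if i = j then (S.card : ℝ) * ‖g i‖ ^ 2 else 0)
        - ⟪ρ (Equiv.swap i o) (g i), ρ (Equiv.swap j o) (g j)⟫_ℝ := by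
    intro i hi j hj
    obtain rfl | hij := eq_or_ne i j
    · rw [if_pos rfl, LinearIsometryEquiv.inner_map_map, real_inner_self_eq_norm_sq]
      ring
    · rw [if_neg hij, inner_map_swap_map_swap hi hj ho (hg i hi),
        card_sub_one_mul_inner hi hj hij (hg i hi) (hg j hj) (horth i hi), zero_sub]
  have hsum : ((S.card : ℝ) - 1) * ‖∑ i ∈ S, g i‖ ^ 2 =
      S.card * ∑ i ∈ S, ‖g i‖ ^ 2 - ‖∑ i ∈ S, ρ (Equiv.swap i o) (g i)‖ ^ 2 := by
    simp only [← real_inner_self_eq_norm_sq (∑ _i ∈ S, _), sum_inner, inner_sum, mul_sum]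
    rw [← sum_sub_distrib]
    refine sum_congr rfl fun i hi => ?_
    rw [sum_congr rfl fun j hj => by rw [real_inner_comm, hinner i hi j hj], sum_sub_distrib,
      sum_ite_eq, if_pos hi]
    simp only [real_inner_comm]
  rw [hsum]
  exact sub_le_self _ (sq_nonneg _)

lemma card_sub_one_mul_sum_norm_starProjection_sq_le [CompleteSpace V] {v : V}
    (hv : v ∈ (fixedVectors ρ (permsOn S))ᗮ) :
    ((S.card : ℝ) - 1) * ∑ i ∈ S, ‖(fixedVectors ρ (permsOn (S.erase i))).starProjection v‖ ^ 2
      ≤ S.card * ‖v‖ ^ 2 := by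
  obtain rfl | hS := S.eq_empty_or_nonempty
  · simp
  set p : ι → V := fun i => (fixedVectors ρ (permsOn (S.erase i))).starProjection v
  have hanti (i : ι) : (fixedVectors ρ (permsOn (S.erase i)))ᗮ ≤ (fixedVectors ρ (permsOn S))ᗮ :=
    Submodule.orthogonal_le (fixedVectors_anti (permsOn_mono (erase_subset i S)))
  have horth (i : ι) : p i ∈ (fixedVectors ρ (permsOn S))ᗮ := by
    rw [← sub_sub_cancel v (p i)]
    exact sub_mem hv (hanti i (Submodule.sub_starProjection_mem_orthogonal v))
  have hsum := card_sub_one_mul_norm_sum_sq_le (g := p)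
    (fun _ _ => Submodule.starProjection_apply_mem _ v) (fun i _ => horth i)
  have hinner : ⟪v, ∑ i ∈ S, p i⟫_ℝ = ∑ i ∈ S, ‖p i‖ ^ 2 := by
    rw [inner_sum]
    exact sum_congr rfl fun _ _ => by
      rw [real_inner_comm]
      exact (fixedVectors ρ _).re_inner_starProjection_eq_normSq v
  have hN : (1 : ℝ) ≤ S.card := by exact_mod_cast hS.card_pos
  -- Cauchy–Schwarz for `v` and `∑ i ∈ S, p i`, scaled so that the bound `hsum` is sharp
  have hsq : 0 ≤ ‖(S.card : ℝ) • v - ((S.card : ℝ) - 1) • ∑ i ∈ S, p i‖ ^ 2 := sq_nonneg _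
  rw [norm_sub_sq_real, norm_smul, norm_smul, real_inner_smul_left, real_inner_smul_right, hinner,
    mul_pow, mul_pow, Real.norm_eq_abs, Real.norm_eq_abs, sq_abs, sq_abs] at hsq
  have hmul := mul_le_mul_of_nonneg_left hsum (sub_nonneg.2 hN)
  refine sub_nonneg.1 (nonneg_of_mul_nonneg_right (a := (S.card : ℝ)) ?_ (by linarith))
  linarith

/-- The Dirichlet form of the random walk that applies transpositions of elements of `S`, summed
over ordered pairs and not normalised. -/
def dirichletForm (ρ : Equiv.Perm ι →* (V ≃ₗᵢ[ℝ] V)) (S : Finset ι) (v : V) : ℝ :=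
  ∑ i ∈ S, ∑ j ∈ S, ⟪v, v - ρ (Equiv.swap i j) v⟫_ℝ

lemma dirichletForm_sub {w : V} (hw : w ∈ fixedVectors ρ (permsOn S)) (v : V) :
    dirichletForm ρ S (v - w) = dirichletForm ρ S v := by
  refine sum_congr rfl fun i hi => sum_congr rfl fun j hj => ?_
  rw [inner_sub_map_self, inner_sub_map_self, map_sub, hw _ (swap_mem_permsOn hi hj),
    sub_sub_sub_cancel_right]

lemma sum_erase_sum_erase {R : Type*} [CommRing R] {f : ι → ι → R} (hf : ∀ i, f i i = 0)
    (S : Finset ι) : ∑ k ∈ S, ∑ i ∈ S.erase k, ∑ j ∈ S.erase k, f i j =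
      ((S.card : R) - 2) * ∑ i ∈ S, ∑ j ∈ S, f i j := by
  have hk : ∀ k ∈ S, ∑ i ∈ S.erase k, ∑ j ∈ S.erase k, f i j =
      ∑ i ∈ S, ∑ j ∈ S, f i j - ∑ i ∈ S, f i k - ∑ j ∈ S, f k j := by
    intro k hk
    simp only [sum_erase_eq_sub hk, sum_sub_distrib, hf, sub_zero]
  rw [sum_congr rfl hk, sum_sub_distrib, sum_sub_distrib, sum_const, nsmul_eq_mul, sum_comm]
  ring

lemma sum_dirichletForm_erase (ρ : Equiv.Perm ι →* (V ≃ₗᵢ[ℝ] V)) (S : Finset ι) (v : V) :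
    ∑ k ∈ S, dirichletForm ρ (S.erase k) v = ((S.card : ℝ) - 2) * dirichletForm ρ S v :=
  sum_erase_sum_erase (fun i => by
    rw [Equiv.swap_self, ← Equiv.Perm.one_def, map_one, LinearIsometryEquiv.coe_one, id_eq,
      sub_self, inner_zero_right]) S

lemma dirichletForm_of_forall_mem_fixedVectors {v : V}
    (hfix : ∀ i ∈ S, v ∈ fixedVectors ρ (permsOn (S.erase i)))
    (horth : v ∈ (fixedVectors ρ (permsOn S))ᗮ) :
    dirichletForm ρ S v = (S.card : ℝ) ^ 2 * ‖v‖ ^ 2 := by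
  have hi : ∀ i ∈ S, ∑ j ∈ S, ⟪v, v - ρ (Equiv.swap i j) v⟫_ℝ = S.card * ‖v‖ ^ 2 := by
    intro i hi
    rw [← inner_sum, sum_sub_distrib, sum_map_swap_eq_zero hi (hfix i hi) horth, sub_zero,
      sum_const, ← Nat.cast_smul_eq_nsmul ℝ, real_inner_smul_right, real_inner_self_eq_norm_sq]
  rw [dirichletForm, sum_congr rfl hi, sum_const, nsmul_eq_mul]
  ring

/-- Spectral gap of the random transposition walk: since `dirichletForm` runs over ordered pairs,
this is the lower bound `S.card` for the sum of `1 - (i j)` over unordered pairs. -/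
theorem two_mul_card_mul_norm_sq_le_dirichletForm [CompleteSpace V] {v : V}
    (hv : v ∈ (fixedVectors ρ (permsOn S))ᗮ) :
    2 * (S.card : ℝ) * ‖v‖ ^ 2 ≤ dirichletForm ρ S v := by
  induction S using Finset.strongInduction generalizing v with
  | H S ih =>
    obtain hS | hS | hS : S.card ≤ 1 ∨ S.card = 2 ∨ 2 < S.card := by lia
    · rw [fixedVectors_permsOn_eq_top hS, Submodule.top_orthogonal_eq_bot, Submodule.mem_bot] at hv
      simp [hv, dirichletForm]
    · have hfix (i : ι) (hi : i ∈ S) : v ∈ fixedVectors ρ (permsOn (S.erase i)) := by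
        rw [fixedVectors_permsOn_eq_top (by rw [card_erase_of_mem hi, hS])]
        exact Submodule.mem_top
      rw [dirichletForm_of_forall_mem_fixedVectors hfix hv, hS, Nat.cast_ofNat, sq (2 : ℝ)]
    · have hstep : ∀ i ∈ S, 2 * ((S.card : ℝ) - 1) *
          (‖v‖ ^ 2 - ‖(fixedVectors ρ (permsOn (S.erase i))).starProjection v‖ ^ 2)
            ≤ dirichletForm ρ (S.erase i) v := by
        intro i hi
        set W := fixedVectors ρ (permsOn (S.erase i))
        have hle := ih _ (erase_ssubset hi) (W.sub_starProjection_mem_orthogonal v)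
        rw [dirichletForm_sub (W.starProjection_apply_mem v), cast_card_erase_of_mem hi] at hle
        have hpyth := W.norm_sq_eq_add_norm_sq_starProjection v
        rw [W.starProjection_orthogonal_val] at hpyth
        rwa [hpyth, add_sub_cancel_left]
      have hsum := sum_le_sum hstep
      rw [sum_dirichletForm_erase, ← mul_sum, sum_sub_distrib, sum_const, nsmul_eq_mul] at hsum
      have hproj := card_sub_one_mul_sum_norm_starProjection_sq_le hv
      have hN : (2 : ℝ) < S.card := by exact_mod_cast hS
      refine le_of_mul_le_mul_left (a := (S.card : ℝ) - 2) ?_ (by linarith)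
      linarith

end Transpositions

section Indicators

variable {X : Type*} [DecidableEq X]

/-- The indicator function of `A` as a vector of the Euclidean space of functions on `X`. -/
def indicatorVec (A : Finset X) : EuclideanSpace ℝ X :=
  WithLp.toLp 2 fun x => if x ∈ A then 1 else 0

lemma indicatorVec_apply (A : Finset X) (x : X) :
    indicatorVec A x = if x ∈ A then 1 else 0 := rfl

variable [Fintype X]

lemma inner_indicatorVec_left (A : Finset X) (f : EuclideanSpace ℝ X) :
    ⟪indicatorVec A, f⟫_ℝ = ∑ x ∈ A, f x := by
  simp [PiLp.inner_apply, indicatorVec_apply]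

lemma inner_indicatorVec_indicatorVec {A B : Finset X} (h : A ⊆ B) :
    ⟪indicatorVec A, indicatorVec B⟫_ℝ = A.card := by
  rw [inner_indicatorVec_left, cast_card]
  exact sum_congr rfl fun x hx => by rw [indicatorVec_apply, if_pos (h hx)]

lemma norm_indicatorVec_sub_smul_sq {A M : Finset X} (hA : A ⊆ M) (hM : M.Nonempty) :
    ‖indicatorVec A - ((A.card : ℝ) / M.card) • indicatorVec M‖ ^ 2 =
      A.card * (1 - A.card / M.card) := by
  have hMcard : (M.card : ℝ) ≠ 0 := by exact_mod_cast hM.card_pos.ne'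
  rw [norm_sub_sq_real, ← real_inner_self_eq_norm_sq, ← real_inner_self_eq_norm_sq,
    real_inner_smul_right, real_inner_smul_right, real_inner_smul_left,
    inner_indicatorVec_indicatorVec hA, inner_indicatorVec_indicatorVec Subset.rfl,
    inner_indicatorVec_indicatorVec Subset.rfl]
  field

end Indicators

section Orbits

variable {G X : Type*} [Group G] [Fintype X] [MulAction G X]

/-- The unitary representation of `G` on real functions on the finite `G`-set `X`. -/
def permutationRep (G X : Type*) [Group G] [Fintype X] [MulAction G X] :
    G →* (EuclideanSpace ℝ X ≃ₗᵢ[ℝ] EuclideanSpace ℝ X) where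
  toFun σ := LinearIsometryEquiv.piLpCongrLeft 2 ℝ ℝ (MulAction.toPerm σ)
  map_one' := by
    ext f x
    simp [LinearIsometryEquiv.piLpCongrLeft_apply]
  map_mul' σ τ := by
    ext f x
    simp [LinearIsometryEquiv.piLpCongrLeft_apply, mul_smul]

lemma permutationRep_apply (σ : G) (f : EuclideanSpace ℝ X) (x : X) :
    permutationRep G X σ f x = f (σ⁻¹ • x) := rfl

lemma apply_eq_of_mem_fixedVectors_top {f : EuclideanSpace ℝ X}
    (hf : f ∈ fixedVectors (permutationRep G X) ⊤) {x y : X} (hy : y ∈ MulAction.orbit G x) :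
    f y = f x := by
  obtain ⟨σ, rfl⟩ := hy
  change f (σ • x) = f x
  conv_lhs => rw [← hf σ (Subgroup.mem_top σ), permutationRep_apply, inv_smul_smul]

variable [DecidableEq X] {A M : Finset X} {x : X}

lemma indicatorVec_orbit_mem_fixedVectors_top (hM : (M : Set X) = MulAction.orbit G x) :
    indicatorVec M ∈ fixedVectors (permutationRep G X) ⊤ := by
  intro σ _
  ext y
  have hmem : σ⁻¹ • y ∈ M ↔ y ∈ M := by
    rw [← mem_coe, ← mem_coe, hM, ← Set.mem_smul_set_iff_inv_smul_mem, MulAction.smul_orbit]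
  simp only [permutationRep_apply, indicatorVec_apply, hmem]

lemma indicatorVec_sub_smul_mem_orthogonal (hM : (M : Set X) = MulAction.orbit G x) (hA : A ⊆ M) :
    indicatorVec A - ((A.card : ℝ) / M.card) • indicatorVec M ∈
      (fixedVectors (permutationRep G X) ⊤)ᗮ := by
  refine (Submodule.mem_orthogonal' _ _).2 fun f hf => ?_
  have hx : x ∈ M := by rw [← mem_coe, hM]; exact MulAction.mem_orbit_self x
  have hMcard : (M.card : ℝ) ≠ 0 := by exact_mod_cast (card_pos.2 ⟨x, hx⟩).ne'
  have hconst : ∀ y ∈ M, f y = f x := fun y hy =>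
    apply_eq_of_mem_fixedVectors_top hf (hM ▸ mem_coe.2 hy)
  rw [inner_sub_left, real_inner_smul_left, inner_indicatorVec_left, inner_indicatorVec_left,
    sum_congr rfl hconst, sum_congr rfl fun y hy => hconst y (hA hy), sum_const, sum_const,
    nsmul_eq_mul, nsmul_eq_mul]
  field

end Orbits

section Isoperimetry

variable {ι X : Type*} [Fintype ι] [DecidableEq ι] [DecidableEq X] [MulAction (Equiv.Perm ι) X]

lemma dirichletForm_indicatorVec [Fintype X] (A : Finset X) :
    dirichletForm (permutationRep (Equiv.Perm ι) X) univ (indicatorVec A) =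
      ∑ x ∈ A, (#{q : ι × ι | Equiv.swap q.1 q.2 • x ∉ A} : ℝ) := by
  have hx : ∀ x ∈ A, ∀ i j : ι, (indicatorVec A -
      permutationRep (Equiv.Perm ι) X (Equiv.swap i j) (indicatorVec A)) x =
        if Equiv.swap i j • x ∉ A then 1 else 0 := by
    intro x hx i j
    rw [PiLp.sub_apply, permutationRep_apply, Equiv.swap_inv, indicatorVec_apply,
      indicatorVec_apply, if_pos hx, ite_not]
    split_ifs <;> norm_num
  simp only [dirichletForm, inner_indicatorVec_left]
  rw [← Fintype.sum_prod_type', sum_comm]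
  refine sum_congr rfl fun x hxA => ?_
  simp only [hx x hxA, sum_boole]

theorem two_mul_card_mul_le_sum_card_swap_smul_notMem [Finite X] {A M : Finset X} {x : X}
    (hM : (M : Set X) = MulAction.orbit (Equiv.Perm ι) x) (hA : A ⊆ M) :
    2 * (Fintype.card ι : ℝ) * (A.card * (1 - A.card / M.card)) ≤
      ∑ u ∈ A, (#{q : ι × ι | Equiv.swap q.1 q.2 • u ∉ A} : ℝ) := by
  cases nonempty_fintype X
  have hMne : M.Nonempty := ⟨x, by rw [← mem_coe, hM]; exact MulAction.mem_orbit_self x⟩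
  have hinv := Submodule.smul_mem _ ((A.card : ℝ) / M.card)
    (indicatorVec_orbit_mem_fixedVectors_top hM)
  have horth := indicatorVec_sub_smul_mem_orthogonal hM hA
  rw [← permsOn_univ] at hinv horth
  have hgap := two_mul_card_mul_norm_sq_le_dirichletForm horth
  rwa [dirichletForm_sub hinv, dirichletForm_indicatorVec, norm_indicatorVec_sub_smul_sq hA hMne,
    card_univ] at hgap

end Isoperimetry

section Multislice

attribute [local instance] arrowAction

lemma mem_orbit_perm_iff_card_fiber_eq {ι C : Type*} [Fintype ι] [DecidableEq C] {u v : ι → C} :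
    v ∈ MulAction.orbit (Equiv.Perm ι) u ↔ ∀ c, #{j | v j = c} = #{j | u j = c} := by
  constructor
  · rintro ⟨σ, rfl⟩ c
    exact card_equiv σ⁻¹ fun j => by simp only [mem_filter_univ]; rfl
  · intro h
    have hfib (c : C) : Nonempty ({j // u j = c} ≃ {j // v j = c}) := by
      rw [← Fintype.card_eq, Fintype.card_subtype, Fintype.card_subtype, h]
    refine ⟨Equiv.ofFiberEquiv fun c => (hfib c).some, funext fun j => ?_⟩
    refine (Equiv.ofFiberEquiv_map (fun c => (hfib c).some) _).symm.trans ?_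
    exact congrArg v (Equiv.apply_symm_apply _ j)

lemma coe_multislice_eq_orbit {ℓ n : ℕ} {κ : Fin ℓ → ℕ} {u : Fin n → Fin ℓ}
    (hu : u ∈ multislice ℓ n κ) :
    (multislice ℓ n κ : Set (Fin n → Fin ℓ)) = MulAction.orbit (Equiv.Perm (Fin n)) u := by
  ext v
  rw [multislice, mem_filter_univ] at hu
  simp only [mem_orbit_perm_iff_card_fiber_eq, hu, multislice, mem_coe, mem_filter_univ]

-- `σ • u` is `u ∘ σ⁻¹`, and transpositions are involutions
lemma card_swap_comp_notMem_eq {ℓ n : ℕ} {A : Finset (Fin n → Fin ℓ)} {u : Fin n → Fin ℓ}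
    (hu : u ∈ A) : #{q : Fin n × Fin n | q.1 ≠ q.2 ∧ u ∘ Equiv.swap q.1 q.2 ∉ A} =
      #{q : Fin n × Fin n | Equiv.swap q.1 q.2 • u ∉ A} := by
  refine congrArg card (filter_congr fun q _ => ?_)
  refine and_iff_right_of_imp fun hq heq => hq ?_
  rwa [heq, Equiv.swap_self]

theorem multislice_isoperimetry_general {ℓ n : ℕ} (hn : 2 ≤ n) {κ : Fin ℓ → ℕ}
    {A : Finset (Fin n → Fin ℓ)} (hA : A ⊆ multislice ℓ n κ) (hne : A.Nonempty) :
    2 * (1 - msVol ℓ n κ A) / ((n : ℝ) - 1) ≤ msExpansion ℓ n A := by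
  have hcard : (0 : ℝ) < A.card := by exact_mod_cast hne.card_pos
  have hn2 : (2 : ℝ) ≤ n := by exact_mod_cast hn
  obtain ⟨u, hu⟩ := hne
  have hle := two_mul_card_mul_le_sum_card_swap_smul_notMem (coe_multislice_eq_orbit (hA hu)) hA
  rw [Fintype.card_fin] at hle
  rw [msExpansion, sum_congr rfl fun v hv => by rw [card_swap_comp_notMem_eq hv],
    le_div_iff₀ (by apply mul_pos hcard; apply mul_pos <;> linarith)]
  calc 2 * (1 - msVol ℓ n κ A) / ((n : ℝ) - 1) * (A.card * (n * ((n : ℝ) - 1)))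
      = 2 * n * (A.card * (1 - msVol ℓ n κ A)) := by
        have : (n : ℝ) - 1 ≠ 0 := by linarith
        field
    _ ≤ _ := hle

end Multislice

/-- **Edge-isoperimetric inequality for the multislice**: a set of volume `α` has expansion at
least `2(1-α)/(n-1)`. -/
theorem multislice_isoperimetry (ℓ n : ℕ) (hℓ : 2 ≤ ℓ) (hn : 4 ≤ n) (κ : Fin ℓ → ℕ)
    (hκ : ∀ i, 0 < κ i) (hsum : ∑ i, κ i = n)
    (A : Finset (Fin n → Fin ℓ)) (hA : A ⊆ multislice ℓ n κ) (hne : A.Nonempty)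
    (α : ℝ) (hα : msVol ℓ n κ A = α) :
    2 * (1 - α) / ((n : ℝ) - 1) ≤ msExpansion ℓ n A :=
  hα ▸ multislice_isoperimetry_general (by lia) hA hne
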